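/- Define the p-transversality graph Γ_p of W: its vertex set is C, with an edge {i,j} whenever components i and j are p-transversal at a point. (1) If Γ_p is a complete graph, then for every nonzero α ∈ A¹, ker(·∧α : A¹ → A²_{W,k}) = k·α; equivalently H¹(A*_{W,k},·∧α) = 0. (2) If Γ_p is connected, then the same conclusion holds for every non-coordinate α ∈ A¹ (α is non-coordinate if α_i ≠ 0 for all i ∈ C). -/

import Mathlib

/-!
If `β ∧ α = 0`, then `α` and `β` satisfy `β_i α_j = α_i β_j` for every edge `{i, j}` of the
`p`-transversality graph (`minor_eq_zero`). Indeed, for a branch `δ₀` at a point `P` the functional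
`x ∧ y ↦ x(δ₀) · s(y) - s(x) · y(δ₀)`, with `s` the sum of the coordinates, kills the cyclic
relations of `I_P` and so descends to `Λ²A_P / I_P` when two components meet at `P`. Applied to the
`P`-component of `β ∧ α` at a `p`-transversal point of `i` and `j`, with `δ₀` on `i`, it gives
`(β_i α_j - α_i β_j) μ_P(δ₀, j)`, and some such multiplicity is nonzero.

If the graph is complete, all the `2 × 2` minors of `(α, β)` vanish, so `β ∈ k·α` as soon as
`α ≠ 0`. If it is connected and `α` has no zero coordinate, the ratio `β_i / α_i` is constant along
edges, hence constant.
-/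

open scoped Classical

/-- The weak combinatorial type of a plane projective curve. -/
structure WeakComb (p : ℕ) where
  /-- the set of irreducible components -/
  C : Type
  [fintypeC : Fintype C]
  [decEqC : DecidableEq C]
  [nonemptyC : Nonempty C]
  /-- the set of singular points -/
  S : Type
  [fintypeS : Fintype S]
  [decEqS : DecidableEq S]
  /-- the local branches at each singular point -/
  Δ : S → Type
  [fintypeΔ : ∀ P, Fintype (Δ P)]
  [decEqΔ : ∀ P, DecidableEq (Δ P)]
  /-- each branch belongs to a component -/
  φ : ∀ P, Δ P → C
  /-- local intersection multiplicities of pairs of branches -/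
  μ : ∀ P, Δ P → Δ P → ℕ
  μ_symm : ∀ P δ δ', φ P δ ≠ φ P δ' → μ P δ δ' = μ P δ' δ
  μ_pos : ∀ P δ δ', φ P δ ≠ φ P δ' → 0 < μ P δ δ'

attribute [instance] WeakComb.fintypeC WeakComb.decEqC WeakComb.nonemptyC
attribute [instance] WeakComb.fintypeS WeakComb.decEqS WeakComb.fintypeΔ WeakComb.decEqΔ

namespace WeakComb

variable {p : ℕ} (W : WeakComb p)

/-- μ_P(δ,δ') with the convention that it vanishes on pairs of branches of the same component. -/
def muk (P : W.S) (δ δ' : W.Δ P) : ℕ :=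
  if W.φ P δ = W.φ P δ' then 0 else W.μ P δ δ'

/-- μ_P(δ, j): the multiplicity of intersection of the branch δ with the component j. -/
def muC (P : W.S) (δ : W.Δ P) (j : W.C) : ℕ :=
  ∑ δ' : W.Δ P, if W.φ P δ' = j then W.muk P δ δ' else 0

/-- A degree assignment: positive degrees satisfying the Bezout condition. -/
def IsDegree (d : W.C → ℕ) : Prop :=
  (∀ i, 0 < d i) ∧
  ∀ i j, i ≠ j →
    d i * d j = ∑ P : W.S, ∑ δ : W.Δ P, if W.φ P δ = i then W.muC P δ j else 0

/-- The basis vector σ_i of A¹ = (C → ZMod p). -/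
noncomputable def sigma (i : W.C) : W.C → ZMod p := Pi.single i 1

/-- The basis vector ψ_P^δ of A_P = (Δ_P → ZMod p). -/
noncomputable def psi (P : W.S) (δ : W.Δ P) : W.Δ P → ZMod p := Pi.single δ 1

/-- ψ_P^δ ∧ ψ_P^δ' as an element of Λ² A_P. -/
noncomputable def psiW (P : W.S) (δ δ' : W.Δ P) : ⋀[ZMod p]^2 (W.Δ P → ZMod p) :=
  ⟨ExteriorAlgebra.ιMulti (ZMod p) 2 ![W.psi P δ, W.psi P δ'],
   ExteriorAlgebra.ιMulti_range (ZMod p) 2 (Set.mem_range_self _)⟩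

/-- The subspace I_P of Λ² A_P. -/
noncomputable def IP (P : W.S) : Submodule (ZMod p) (⋀[ZMod p]^2 (W.Δ P → ZMod p)) :=
  Submodule.span (ZMod p)
    ({x | ∃ δ1 δ2 δ3 : W.Δ P, x = W.psiW P δ1 δ2 + W.psiW P δ2 δ3 + W.psiW P δ3 δ1} ∪
     {x | (∀ δ δ' : W.Δ P, W.φ P δ = W.φ P δ') ∧ ∃ δ1 δ2 : W.Δ P, x = W.psiW P δ1 δ2})

/-- The degree-two part A² = A^{2,0} ⊕ A^{2,∞} of the Combinatorial Aomoto algebra. -/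
abbrev A2 (d : W.C → ℕ) : Type :=
  ((P : W.S) → (⋀[ZMod p]^2 (W.Δ P → ZMod p)) ⧸ W.IP P) ×
  ({i : W.C // p ∣ d i} → ZMod p)

/-- The wedge product A¹ × A¹ → A², extending σ_i ∧ σ_j bilinearly. -/
noncomputable def wedge (d : W.C → ℕ) (α β : W.C → ZMod p) : W.A2 d :=
  (fun P => ∑ δ : W.Δ P, ∑ δ' : W.Δ P,
      (α (W.φ P δ) * β (W.φ P δ') * (W.muk P δ δ' : ZMod p)) •
        Submodule.Quotient.mk (W.psiW P δ δ'),
   fun i => α i.1 * (∑ j : W.C, (d j : ZMod p) * β j)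
          - β i.1 * (∑ j : W.C, (d j : ZMod p) * α j))

/-- The linear map ·∧α : A¹ → A², β ↦ β ∧ α. -/
noncomputable def wedgeL (d : W.C → ℕ) (α : W.C → ZMod p) :
    (W.C → ZMod p) →ₗ[ZMod p] W.A2 d where
  toFun β := W.wedge d β α
  map_add' β γ := by
    refine Prod.ext ?_ ?_
    · funext P
      simp only [wedge, Pi.add_apply, Prod.fst_add]
      rw [← Finset.sum_add_distrib]
      refine Finset.sum_congr rfl fun δ _ => ?_
      rw [← Finset.sum_add_distrib]
      refine Finset.sum_congr rfl fun δ' _ => ?_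
      rw [← add_smul, add_mul, add_mul]
    · funext i
      simp only [wedge, Pi.add_apply, Prod.snd_add]
      rw [show (∑ x : W.C, (d x : ZMod p) * (β x + γ x))
            = (∑ x : W.C, (d x : ZMod p) * β x) + ∑ x : W.C, (d x : ZMod p) * γ x by
        rw [← Finset.sum_add_distrib]; exact Finset.sum_congr rfl fun x _ => by ring]
      ring
  map_smul' c β := by
    refine Prod.ext ?_ ?_
    · funext P
      simp only [wedge, Pi.smul_apply, smul_eq_mul, RingHom.id_apply, Prod.smul_fst]
      rw [Finset.smul_sum]
      refine Finset.sum_congr rfl fun δ _ => ?_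
      rw [Finset.smul_sum]
      refine Finset.sum_congr rfl fun δ' _ => ?_
      rw [smul_smul]
      ring_nf
    · funext i
      simp only [wedge, Pi.smul_apply, smul_eq_mul, RingHom.id_apply, Prod.smul_snd]
      rw [show (∑ x : W.C, (d x : ZMod p) * (c * β x)) = c * ∑ x : W.C, (d x : ZMod p) * β x by
        rw [Finset.mul_sum]; exact Finset.sum_congr rfl fun x _ => by ring]
      ring

/-- The kernel of ·∧α : A¹ → A². -/
noncomputable def wedgeKer (d : W.C → ℕ) (α : W.C → ZMod p) :
    Submodule (ZMod p) (W.C → ZMod p) :=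
  LinearMap.ker (W.wedgeL d α)

/-- H¹ of the Combinatorial Aomoto complex with differential ·∧α. -/
noncomputable abbrev H1 (d : W.C → ℕ) (α : W.C → ZMod p) :=
  (W.wedgeKer d α) ⧸
    (Submodule.comap (W.wedgeKer d α).subtype (Submodule.span (ZMod p) {α}))

end WeakComb

namespace WeakComb

variable {p : ℕ} (W : WeakComb p)

/-- The resonance condition for (α,β) at the branch δ of the point P. -/
def ResCond (α β : W.C → ZMod p) (P : W.S) (δ : W.Δ P) : Prop :=
  β (W.φ P δ) * (∑ j : W.C, (W.muC P δ j : ZMod p) * α j)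
    - α (W.φ P δ) * (∑ j : W.C, (W.muC P δ j : ZMod p) * β j) = 0

/-- P is a p-transversal point for the pair of components i ≠ j. -/
def PTransPoint (P : W.S) (i j : W.C) : Prop :=
  i ≠ j ∧ (∀ δ : W.Δ P, W.φ P δ = i ∨ W.φ P δ = j) ∧
  (∃ δ : W.Δ P, W.φ P δ = i) ∧ (∃ δ : W.Δ P, W.φ P δ = j) ∧
  ((∃ δ : W.Δ P, W.φ P δ = i ∧ ((W.muC P δ j : ZMod p) ≠ 0)) ∨
   (∃ δ : W.Δ P, W.φ P δ = j ∧ ((W.muC P δ i : ZMod p) ≠ 0)))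

/-- The components i and j are p-transversal at a point. -/
def PTransComponents (i j : W.C) : Prop := ∃ P : W.S, W.PTransPoint P i j

/-- α is non-coordinate if all its coordinates are nonzero. -/
def NonCoordinate (α : W.C → ZMod p) : Prop := ∀ i, α i ≠ 0

end WeakComb

/-- The setoid (partition) obtained from s by merging the classes of c₀ and c₁. -/
def mergeSetoid {α : Type*} (s : Setoid α) (c₀ c₁ : α) : Setoid α :=
  Relation.EqvGen.setoid (fun a b => s.r a b ∨ (a = c₀ ∧ b = c₁))

namespace WeakComb

variable {p : ℕ} (W : WeakComb p)

/-- W is p-transversal at P with respect to (α, π), where the surjection π is encoded by the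
setoid s of its fibres; the two classes π(φ_P(Δ_P)) = {i',j'} are those of c₀ and c₁. -/
def PTransversalAt (α : W.C → ZMod p) (s : Setoid W.C) (P : W.S) (c₀ c₁ : W.C) : Prop :=
  ¬ s.r c₀ c₁ ∧
  (∀ δ : W.Δ P, s.r (W.φ P δ) c₀ ∨ s.r (W.φ P δ) c₁) ∧
  (∃ δ : W.Δ P, s.r (W.φ P δ) c₀) ∧ (∃ δ : W.Δ P, s.r (W.φ P δ) c₁) ∧
  ∃ δ : W.Δ P, s.r (W.φ P δ) c₀ ∧
    (∑ δ' : W.Δ P, if s.r (W.φ P δ') c₁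
        then (W.muk P δ δ' : ZMod p) * α (W.φ P δ') else 0) ≠ 0

/-- A p-reduction step with respect to α. -/
def RedStep (α : W.C → ZMod p) (s s' : Setoid W.C) : Prop :=
  ∃ (P : W.S) (c₀ c₁ : W.C), W.PTransversalAt α s P c₀ c₁ ∧ s' = mergeSetoid s c₀ c₁

/-- W is completely p-reductive with respect to α: starting from the identity partition (⊥),
some finite sequence of p-reduction steps reaches the one-class partition (⊤). -/
def CompletelyPReductive (α : W.C → ZMod p) : Prop :=
  Relation.ReflTransGen (W.RedStep α) ⊥ ⊤

/-- β is π-proportional to α, for the surjection π encoded by the setoid s: on each class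
of s, β is a scalar multiple of α. -/
def Proportional (s : Setoid W.C) (α β : W.C → ZMod p) : Prop :=
  ∀ c : W.C, ∃ l : ZMod p, ∀ c', s.r c c' → β c' = l * α c'

end WeakComb

/-- A combinatorial quasi-fiber structure of rank r on W. -/
structure QuasiFiber {p : ℕ} (W : WeakComb p) (r : ℕ) where
  /-- which quasi-fiber each component belongs to -/
  g : W.C → Fin r
  g_surj : Function.Surjective g
  /-- multiplicities of components inside the quasi-fibers -/
  m : W.C → ℕ
  m_pos : ∀ c, 0 < m c
  /-- the set of base points -/
  B : Set W.S
  fiber_off_base : ∀ P : W.S, P ∉ B → ∀ δ δ' : W.Δ P, g (W.φ P δ) = g (W.φ P δ')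

namespace WeakComb

variable {p : ℕ} (W : WeakComb p) {r : ℕ}

/-- M_s(δ) for a branch δ at a base point P. -/
noncomputable def Mcoef (F : QuasiFiber W r) (P : W.S) (δ : W.Δ P) (s : Fin r) : ZMod p :=
  ∑ δ' : W.Δ P,
    if W.φ P δ' ≠ W.φ P δ ∧ F.g (W.φ P δ') = s
      then ((F.m (W.φ P δ') * W.μ P δ δ' : ℕ) : ZMod p) else 0

/-- ω_a = Σ_c m_c · a_{g(c)} · σ_c ∈ A¹. -/
noncomputable def omega (F : QuasiFiber W r) (a : Fin r → ZMod p) : W.C → ZMod p :=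
  fun c => (F.m c : ZMod p) * a (F.g c)

/-- The restricted combinatorics W°_s of the quasi-fiber s. -/
noncomputable def restrict (F : QuasiFiber W r) (s : Fin r) : WeakComb p where
  C := {c : W.C // F.g c = s}
  fintypeC := Fintype.ofFinite _
  decEqC := inferInstance
  nonemptyC := by obtain ⟨c, hc⟩ := F.g_surj s; exact ⟨⟨c, hc⟩⟩
  S := {P : W.S // Nonempty (W.Δ P) ∧ ∀ δ : W.Δ P, F.g (W.φ P δ) = s}
  fintypeS := Fintype.ofFinite _
  decEqS := inferInstance
  Δ := fun P => W.Δ P.1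
  fintypeΔ := fun P => inferInstance
  decEqΔ := fun P => inferInstance
  φ := fun P δ => ⟨W.φ P.1 δ, P.2.2 δ⟩
  μ := fun P δ δ' => W.μ P.1 δ δ'
  μ_symm := fun P δ δ' h => W.μ_symm P.1 δ δ' (fun e => h (Subtype.ext e))
  μ_pos := fun P δ δ' h => W.μ_pos P.1 δ δ' (fun e => h (Subtype.ext e))

/-- The restriction ω_a|_s of ω_a to the restricted combinatorics W°_s. -/
noncomputable def omegaRes (F : QuasiFiber W r) (a : Fin r → ZMod p) (s : Fin r) :
    (W.restrict F s).C → ZMod p :=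
  fun c => (F.m c.1 : ZMod p) * a s

end WeakComb

section Statements

open WeakComb

namespace WeakComb

/-- The `2`-form `x ∧ y ↦ x(δ₀) · s(y) - s(x) · y(δ₀)` on `A_P`, where `s` is the sum of the
coordinates, as a functional on `Λ²A_P`. -/
noncomputable def branchForm {p : ℕ} (W : WeakComb p) (P : W.S) (δ₀ : W.Δ P) :
    ⋀[ZMod p]^2 (W.Δ P → ZMod p) →ₗ[ZMod p] ZMod p :=
  exteriorPower.alternatingMapLinearEquiv
    ((Matrix.detRowAlternating (R := ZMod p) (n := Fin 2)).compLinearMap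
      (LinearMap.pi ![LinearMap.proj δ₀, ∑ δ : W.Δ P, LinearMap.proj δ]))

lemma branchForm_psiW {p : ℕ} (W : WeakComb p) (P : W.S) (δ₀ δ δ' : W.Δ P) :
    W.branchForm P δ₀ (W.psiW P δ δ') =
      (if δ = δ₀ then 1 else 0) - (if δ' = δ₀ then 1 else 0) := by
  have h : W.psiW P δ δ' = exteriorPower.ιMulti (ZMod p) 2 ![W.psi P δ, W.psi P δ'] := rfl
  rw [h, branchForm, exteriorPower.alternatingMapLinearEquiv_apply_ιMulti]
  rw [AlternatingMap.compLinearMap_apply]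
  refine (Matrix.det_fin_two (Matrix.of _)).trans ?_
  simp [psi, Pi.single_apply, eq_comm]

lemma IP_le_ker_branchForm {p : ℕ} (W : WeakComb p) (P : W.S) (δ₀ : W.Δ P)
    (hP : ¬ ∀ δ δ' : W.Δ P, W.φ P δ = W.φ P δ') :
    W.IP P ≤ LinearMap.ker (W.branchForm P δ₀) := by
  rw [IP, Submodule.span_le]
  rintro x (⟨δ1, δ2, δ3, rfl⟩ | ⟨h, -⟩)
  · simp only [SetLike.mem_coe, LinearMap.mem_ker, map_add, branchForm_psiW]
    ring
  · exact absurd h hP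

lemma muk_comm {p : ℕ} (W : WeakComb p) (P : W.S) (δ δ' : W.Δ P) :
    W.muk P δ δ' = W.muk P δ' δ := by
  unfold muk
  by_cases h : W.φ P δ = W.φ P δ'
  · simp [h]
  · rw [if_neg h, if_neg (Ne.symm h), W.μ_symm P δ δ' h]

/-- At a point lying on exactly two components, only the other component contributes to the
weighted intersection number of a branch. -/
lemma sum_muk_eq {p : ℕ} (W : WeakComb p) (P : W.S) {i j : W.C} (hij : i ≠ j)
    (hP : ∀ δ : W.Δ P, W.φ P δ = i ∨ W.φ P δ = j) (γ : W.C → ZMod p) (δ₀ : W.Δ P)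
    (h₀ : W.φ P δ₀ = i) :
    ∑ δ : W.Δ P, γ (W.φ P δ) * (W.muk P δ₀ δ : ZMod p) = γ j * (W.muC P δ₀ j : ZMod p) := by
  rw [muC, Nat.cast_sum, Finset.mul_sum]
  refine Finset.sum_congr rfl fun δ _ => ?_
  rcases hP δ with h | h
  · simp [muk, h, h₀, hij]
  · simp [h]

/-- The functional attached to a branch of `i` sees the minor `β_i α_j - α_i β_j` of `β ∧ α` with
weight the intersection multiplicity of that branch with `j`. -/
lemma minor_mul_muC {p : ℕ} (W : WeakComb p) (d : W.C → ℕ) (α β : W.C → ZMod p)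
    (h : W.wedge d β α = 0) (P : W.S) {i j : W.C} (hij : i ≠ j)
    (hP : ∀ δ : W.Δ P, W.φ P δ = i ∨ W.φ P δ = j) (hj : ∃ δ : W.Δ P, W.φ P δ = j)
    (δ₀ : W.Δ P) (h₀ : W.φ P δ₀ = i) :
    (β i * α j - α i * β j) * (W.muC P δ₀ j : ZMod p) = 0 := by
  obtain ⟨δ₁, h₁⟩ := hj
  have hne : ¬ ∀ δ δ' : W.Δ P, W.φ P δ = W.φ P δ' := fun H =>
    hij (h₀ ▸ h₁ ▸ H δ₀ δ₁)
  have h1 := congrFun (congrArg Prod.fst h) P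
  have h2 := congrArg ((W.IP P).liftQ (W.branchForm P δ₀)
    (W.IP_le_ker_branchForm P δ₀ hne)) h1
  simp only [wedge, map_sum, map_smul, Submodule.liftQ_apply, branchForm_psiW, smul_eq_mul,
    Prod.fst_zero, Pi.zero_apply, map_zero, mul_sub, Finset.sum_sub_distrib, mul_ite, mul_one,
    mul_zero, Finset.sum_ite_eq', Finset.mem_univ, if_true] at h2
  rw [Finset.sum_comm] at h2
  simp only [Finset.sum_ite_eq', Finset.mem_univ, if_true, h₀] at h2
  have ha := W.sum_muk_eq P hij hP α δ₀ h₀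
  have hb := W.sum_muk_eq P hij hP β δ₀ h₀
  have ea : ∑ δ : W.Δ P, β i * α (W.φ P δ) * (W.muk P δ₀ δ : ZMod p)
      = β i * (α j * (W.muC P δ₀ j : ZMod p)) := by
    rw [← ha, Finset.mul_sum]
    exact Finset.sum_congr rfl fun _ _ => by ring
  have eb : ∑ δ : W.Δ P, β (W.φ P δ) * α i * (W.muk P δ δ₀ : ZMod p)
      = α i * (β j * (W.muC P δ₀ j : ZMod p)) := by
    rw [← hb, Finset.mul_sum]
    exact Finset.sum_congr rfl fun δ _ => by rw [W.muk_comm P δ δ₀]; ring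
  rw [ea, eb] at h2
  linear_combination h2

lemma minor_eq_zero {p : ℕ} [Fact p.Prime] (W : WeakComb p) (d : W.C → ℕ)
    (α β : W.C → ZMod p) (h : W.wedge d β α = 0) {i j : W.C} (hT : W.PTransComponents i j) :
    β i * α j = α i * β j := by
  obtain ⟨P, hij, hP, hi, hj, ⟨δ, hδ, hμ⟩ | ⟨δ, hδ, hμ⟩⟩ := hT
  · have := (mul_eq_zero.1 (W.minor_mul_muC d α β h P hij hP hj δ hδ)).resolve_right hμ
    linear_combination this
  · have := (mul_eq_zero.1 (W.minor_mul_muC d α β h P hij.symm (fun δ => (hP δ).symm) hi δ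
      hδ)).resolve_right hμ
    linear_combination -this

lemma psiW_add_swap {p : ℕ} (W : WeakComb p) (P : W.S) (δ δ' : W.Δ P) :
    W.psiW P δ δ' + W.psiW P δ' δ = 0 := by
  apply Subtype.ext
  change ExteriorAlgebra.ιMulti (ZMod p) 2 ![W.psi P δ, W.psi P δ'] +
    ExteriorAlgebra.ιMulti (ZMod p) 2 ![W.psi P δ', W.psi P δ] = 0
  simp only [ExteriorAlgebra.ιMulti_apply, List.ofFn_succ, List.ofFn_zero, List.prod_cons,
    List.prod_nil, mul_one]
  exact ExteriorAlgebra.ι_add_mul_swap _ _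

/-- The product is alternating. Terms are cancelled in pairs `(δ, δ')`, `(δ', δ)`, and the
diagonal terms vanish individually, so characteristic `2` needs no separate treatment. -/
lemma wedge_self {p : ℕ} (W : WeakComb p) (d : W.C → ℕ) (α : W.C → ZMod p) :
    W.wedge d α α = 0 := by
  refine Prod.ext ?_ ?_
  · funext P
    simp only [wedge, Prod.fst_zero, Pi.zero_apply]
    rw [← Finset.sum_product']
    refine Finset.sum_involution (fun x _ => x.swap) ?_ ?_ (by simp) (by simp)
    · rintro ⟨δ, δ'⟩ -
      simp only [Prod.swap]
      rw [W.muk_comm P δ' δ, mul_comm (α (W.φ P δ')), ← smul_add, ← Submodule.Quotient.mk_add,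
        psiW_add_swap, Submodule.Quotient.mk_zero, smul_zero]
    · rintro ⟨δ, δ'⟩ - hne heq
      obtain rfl : δ' = δ := congrArg Prod.fst heq
      exact hne (by simp [muk])
  · funext i
    simp [wedge]

/-- If `α_k ≠ 0` and every element of `ker(·∧α)` has its `k`-th and `i`-th coordinates
proportional to those of `α`, for all `i`, then the kernel is the span of `α` and `H¹` vanishes. -/
lemma ker_eq_span_of_minors {p : ℕ} [Fact p.Prime] (W : WeakComb p) (d : W.C → ℕ)
    (α : W.C → ZMod p) (k : W.C) (hk : α k ≠ 0)
    (H : ∀ β, W.wedge d β α = 0 → ∀ i, β k * α i = α k * β i) :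
    LinearMap.ker (W.wedgeL d α) = Submodule.span (ZMod p) {α} ∧
      Subsingleton (W.H1 d α) := by
  have key : LinearMap.ker (W.wedgeL d α) = Submodule.span (ZMod p) {α} := by
    apply le_antisymm
    · intro β hβ
      refine Submodule.mem_span_singleton.2 ⟨β k / α k, funext fun i => ?_⟩
      have := H β hβ i
      simp only [Pi.smul_apply, smul_eq_mul]
      field_simp
      linear_combination this
    · rw [Submodule.span_le, Set.singleton_subset_iff]
      exact W.wedge_self d α
  refine ⟨key, ?_⟩
  rw [Submodule.Quotient.subsingleton_iff, Submodule.comap_subtype_eq_top]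
  exact key.le

end WeakComb

variable {p : ℕ} [Fact p.Prime]

/-- Proposition `pairwiseptransversal`. -/
theorem stmt5 (W : WeakComb p) (d : W.C → ℕ) (hd : W.IsDegree d) :
    ((∀ i j : W.C, i ≠ j → W.PTransComponents i j) →
      ∀ α : W.C → ZMod p, α ≠ 0 →
        LinearMap.ker (W.wedgeL d α) = Submodule.span (ZMod p) {α} ∧
        Subsingleton (W.H1 d α)) ∧
    ((∀ i j : W.C, Relation.ReflTransGen W.PTransComponents i j) →
      ∀ α : W.C → ZMod p, W.NonCoordinate α →
        LinearMap.ker (W.wedgeL d α) = Submodule.span (ZMod p) {α} ∧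
        Subsingleton (W.H1 d α)) := by
  refine ⟨fun hT α hα => ?_, fun hT α hα => ?_⟩
  · obtain ⟨k, hk⟩ := Function.ne_iff.1 hα
    refine W.ker_eq_span_of_minors d α k hk fun β hβ i => ?_
    by_cases h : k = i
    · subst h; ring
    · exact W.minor_eq_zero d α β hβ (hT k i h)
  · obtain ⟨k⟩ := W.nonemptyC
    refine W.ker_eq_span_of_minors d α k (hα k) fun β hβ i => ?_
    induction hT k i with
    | refl => ring
    | @tail b c _ hbc ih =>
      -- Proportionality passes from `b` to `c` after cancelling `α b`.
      apply mul_left_cancel₀ (hα b)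
      linear_combination α c * ih + α k * W.minor_eq_zero d α β hβ hbc

end Statements
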